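/- Let γ be an affinely parametrized null geodesic of a warped product M̂ ×_f Y, and E(u) the parallel transport along γ of a vector e with e^i = 0 that is orthogonal to N(0); let b := g(e,e) and C the constant with ḡ(N̄,N̄) = C/f⁴. Then Ē^i = f h N̄^i with h solving dh/du = Ê^a ∂_a(1/f), h(0)=0; one has ĝ(Ê,Ê) + C h² = b and ĝ(N̂,Ê) = −C h/f; the vector field ℰ̂^a := Ê^a − f h N̂^a along γ satisfies ĝ(ℰ̂,ℰ̂) = b, ĝ(N̂,ℰ̂) = 0, N̂^b ∇̂_b ℰ̂^a = −(d(hf)/du) N̂^a, and ℰ̂^a(0) = e^a; and, whenever C ≠ 0 (so the base projection γ̂ is a timelike curve of (M̂, ĝ)), ℰ̂ is Fermi–Walker transported along γ̂. -/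

import Mathlib

open Filter MeasureTheory
open scoped BigOperators Topology

noncomputable section

namespace Paper

variable {ι : Type*} [Fintype ι] [DecidableEq ι]
variable {κ : Type*} [Fintype κ] [DecidableEq κ]

/-- Coordinate partial derivative of a scalar field in the direction `ρ`. -/
def pd (h : (ι → ℝ) → ℝ) (ρ : ι) (x : ι → ℝ) : ℝ :=
  fderiv ℝ h x (Pi.single ρ 1)

/-- The inverse metric. -/
def ginv (g : (ι → ℝ) → Matrix ι ι ℝ) (x : ι → ℝ) : Matrix ι ι ℝ :=
  (g x)⁻¹

/-- Christoffel symbols `Γ^μ_{ρσ} = ½ g^{μν}(∂_ρ g_{νσ} + ∂_σ g_{νρ} − ∂_ν g_{ρσ})`. -/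
def Γc (g : (ι → ℝ) → Matrix ι ι ℝ) (μ ρ σ : ι) (x : ι → ℝ) : ℝ :=
  (1 / 2) * ∑ ν, ginv g x μ ν *
    (pd (fun y => g y ν σ) ρ x + pd (fun y => g y ν ρ) σ x - pd (fun y => g y ρ σ) ν x)

/-- Riemann curvature tensor `R^α_{βμν}`. -/
def Riem (g : (ι → ℝ) → Matrix ι ι ℝ) (α β μ ν : ι) (x : ι → ℝ) : ℝ :=
  pd (Γc g α ν β) μ x - pd (Γc g α μ β) ν x
    + ∑ lam, Γc g α μ lam x * Γc g lam ν β x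
    - ∑ lam, Γc g α ν lam x * Γc g lam μ β x

/-- Riemann tensor with the first index lowered, `R_{μνρσ} = g_{μλ} R^λ_{νρσ}`. -/
def RiemLow (g : (ι → ℝ) → Matrix ι ι ℝ) (μ ν ρ σ : ι) (x : ι → ℝ) : ℝ :=
  ∑ lam, g x μ lam * Riem g lam ν ρ σ x

/-- Ricci tensor `R_{μν} = R^ρ_{μρν}`. -/
def Ric (g : (ι → ℝ) → Matrix ι ι ℝ) (μ ν : ι) (x : ι → ℝ) : ℝ :=
  ∑ ρ, Riem g ρ μ ρ ν x

/-- Scalar product of two vectors with respect to the metric at `x`. -/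
def sq (g : (ι → ℝ) → Matrix ι ι ℝ) (x : ι → ℝ) (v w : ι → ℝ) : ℝ :=
  ∑ μ, ∑ ν, g x μ ν * v μ * w ν

/-- Velocity (tangent vector field) of a parametrized curve. -/
def vel (γ : ℝ → ι → ℝ) (u : ℝ) : ι → ℝ :=
  fun μ => deriv (fun w => γ w μ) u

/-- Covariant derivative, along the curve `γ`, of a vector field `V` given along `γ`. -/
def covD (g : (ι → ℝ) → Matrix ι ι ℝ) (γ V : ℝ → ι → ℝ) (u : ℝ) (μ : ι) : ℝ :=
  deriv (fun w => V w μ) u + ∑ ρ, ∑ σ, Γc g μ ρ σ (γ u) * vel γ u ρ * V u σ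

/-- The (affinely parametrized) geodesic equation at parameter value `u`. -/
def GeodesicAt (g : (ι → ℝ) → Matrix ι ι ℝ) (γ : ℝ → ι → ℝ) (u : ℝ) : Prop :=
  ∀ μ, covD g γ (vel γ) u μ = 0

/-- `γ` is an affinely parametrized geodesic of `g`. -/
def IsGeodesic (g : (ι → ℝ) → Matrix ι ι ℝ) (γ : ℝ → ι → ℝ) : Prop :=
  ∀ u, GeodesicAt g γ u

/-- `E` is parallelly transported along `γ`. -/
def IsParallel (g : (ι → ℝ) → Matrix ι ι ℝ) (γ E : ℝ → ι → ℝ) : Prop :=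
  ∀ u μ, covD g γ E u μ = 0

def SmoothCurve (γ : ℝ → ι → ℝ) : Prop :=
  ∀ μ, ContDiff ℝ (⊤ : ℕ∞) fun u => γ u μ

/-- A smooth symmetric everywhere-nondegenerate metric. -/
def SmoothMetric (g : (ι → ℝ) → Matrix ι ι ℝ) : Prop :=
  (∀ μ ν, ContDiff ℝ (⊤ : ℕ∞) fun x => g x μ ν) ∧
    (∀ x μ ν, g x μ ν = g x ν μ) ∧ ∀ x, IsUnit (g x).det

/-- Lorentzian signature `(−,+,…,+)`: there is a timelike vector whose `g`-orthogonal
complement is positive definite. -/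
def Lorentzian (g : (ι → ℝ) → Matrix ι ι ℝ) : Prop :=
  SmoothMetric g ∧
    ∀ x, ∃ t : ι → ℝ, sq g x t t < 0 ∧ ∀ v : ι → ℝ, sq g x t v = 0 → v ≠ 0 → 0 < sq g x v v

/-- Riemannian (positive definite) metric. -/
def Riemannian (g : (ι → ℝ) → Matrix ι ι ℝ) : Prop :=
  SmoothMetric g ∧ ∀ x, ∀ v : ι → ℝ, v ≠ 0 → 0 < sq g x v v

def NullVec (g : (ι → ℝ) → Matrix ι ι ℝ) (x v : ι → ℝ) : Prop :=
  sq g x v v = 0 ∧ v ≠ 0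

/-- A time orientation: an everywhere timelike vector field. -/
def TimeOrientation (g : (ι → ℝ) → Matrix ι ι ℝ) (T : (ι → ℝ) → ι → ℝ) : Prop :=
  ∀ x, sq g x (T x) (T x) < 0

/-- `v` is a future-pointing causal vector at `x` (wrt the time orientation `T`). -/
def FutureCausal (g : (ι → ℝ) → Matrix ι ι ℝ) (T : (ι → ℝ) → ι → ℝ) (x v : ι → ℝ) : Prop :=
  sq g x v v ≤ 0 ∧ v ≠ 0 ∧ sq g x (T x) v < 0

/-- `S` is met exactly once by every inextendible future-directed causal curve
(inextendibility being encoded by parametrization by Euclidean arclength on all of `ℝ`). -/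
def IsCauchySurface (g : (ι → ℝ) → Matrix ι ι ℝ) (T : (ι → ℝ) → ι → ℝ)
    (S : Set (ι → ℝ)) : Prop :=
  ∀ γ : ℝ → ι → ℝ, (∀ μ, Differentiable ℝ fun u => γ u μ) →
    (∀ u, FutureCausal g T (γ u) (vel γ u)) →
    (∀ u, ∑ μ, (vel γ u μ) ^ 2 = 1) → ∃! u, γ u ∈ S

/-- `g`-gradient vector of a scalar function. -/
def gradVec (g : (ι → ℝ) → Matrix ι ι ℝ) (τ : (ι → ℝ) → ℝ) (x : ι → ℝ) : ι → ℝ :=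
  fun μ => ∑ ν, ginv g x μ ν * pd τ ν x

/-- Existence of a non-compact (spacelike) Cauchy hypersurface, encoded as a regular
level set of a smooth function with timelike gradient. -/
def HasNoncompactCauchySurface (g : (ι → ℝ) → Matrix ι ι ℝ)
    (T : (ι → ℝ) → ι → ℝ) : Prop :=
  ∃ τ : (ι → ℝ) → ℝ, ContDiff ℝ (⊤ : ℕ∞) τ ∧ ¬ IsCompact {x | τ x = 0} ∧
    (∀ x, τ x = 0 → sq g x (gradVec g τ x) (gradVec g τ x) < 0) ∧
    IsCauchySurface g T {x | τ x = 0}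

/-- Null geodesic completeness: every null initial datum extends to a geodesic
defined for all values of the affine parameter. -/
def NullComplete (g : (ι → ℝ) → Matrix ι ι ℝ) : Prop :=
  ∀ x v : ι → ℝ, NullVec g x v →
    ∃ γ : ℝ → ι → ℝ, SmoothCurve γ ∧ γ 0 = x ∧ vel γ 0 = v ∧ IsGeodesic g γ

/-- Future null geodesic completeness. -/
def FutureNullComplete (g : (ι → ℝ) → Matrix ι ι ℝ) (T : (ι → ℝ) → ι → ℝ) : Prop :=
  ∀ x v : ι → ℝ, NullVec g x v → FutureCausal g T x v →
    ∃ γ : ℝ → ι → ℝ, SmoothCurve γ ∧ γ 0 = x ∧ vel γ 0 = v ∧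
      ∀ u, 0 ≤ u → GeodesicAt g γ u

/-! ### Submanifolds given implicitly as regular zero sets -/

/-- Differential (lowered normal covectors) of the defining map `F`. -/
def dFm (F : (ι → ℝ) → κ → ℝ) (α : κ) (μ : ι) (x : ι → ℝ) : ℝ :=
  pd (fun y => F y α) μ x

/-- The normal vectors `ν_α = grad F^α` spanning the normal space. -/
def normalBasis (g : (ι → ℝ) → Matrix ι ι ℝ) (F : (ι → ℝ) → κ → ℝ) (α : κ)
    (x : ι → ℝ) : ι → ℝ :=
  fun μ => ∑ ν, ginv g x μ ν * dFm F α ν x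

/-- Gram matrix `W_{αβ} = g(ν_α, ν_β)` of the normals. -/
def gram (g : (ι → ℝ) → Matrix ι ι ℝ) (F : (ι → ℝ) → κ → ℝ) (x : ι → ℝ) :
    Matrix κ κ ℝ :=
  Matrix.of fun α β => ∑ μ, dFm F α μ x * normalBasis g F β x μ

/-- The (contravariant) orthogonal projector onto the tangent space of `{F = 0}`. -/
def tanProj (g : (ι → ℝ) → Matrix ι ι ℝ) (F : (ι → ℝ) → κ → ℝ) (x : ι → ℝ)
    (μ ν : ι) : ℝ :=
  ginv g x μ ν -
    ∑ α, ∑ β, (gram g F x)⁻¹ α β * normalBasis g F α x μ * normalBasis g F β x ν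

/-- Covariant Hessian `∇_μ ∇_ν F^α`. -/
def hessF (g : (ι → ℝ) → Matrix ι ι ℝ) (F : (ι → ℝ) → κ → ℝ) (α : κ) (μ ν : ι)
    (x : ι → ℝ) : ℝ :=
  pd (fun y => dFm F α ν y) μ x - ∑ lam, Γc g lam μ ν x * dFm F α lam x

/-- The expansion `θ(n)` of the submanifold `{F = 0}` along the normal
`n = ∑ c_α ν_α`, namely `θ(n) = ∑_α c_α h^{μν} ∇_μ∇_ν F^α`. -/
def expansionCoeff (g : (ι → ℝ) → Matrix ι ι ℝ) (F : (ι → ℝ) → κ → ℝ) (x : ι → ℝ)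
    (c : κ → ℝ) : ℝ :=
  ∑ α, c α * ∑ μ, ∑ ν, tanProj g F x μ ν * hessF g F α μ ν x

/-- `v` is tangent to the level set `{F = 0}` at `x`. -/
def TangentTo (F : (ι → ℝ) → κ → ℝ) (x v : ι → ℝ) : Prop :=
  ∀ α, ∑ μ, dFm F α μ x * v μ = 0

/-- The normal vector with components `c` in the basis of normals. -/
def NormalComb (g : (ι → ℝ) → Matrix ι ι ℝ) (F : (ι → ℝ) → κ → ℝ) (x : ι → ℝ)
    (c : κ → ℝ) : ι → ℝ :=
  fun μ => ∑ α, c α * normalBasis g F α x μ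

/-- A closed (compact without boundary) spacelike submanifold, given as the regular
zero set of the smooth map `F`, of co-dimension `card κ`. -/
def ClosedSpacelikeSubmanifold (g : (ι → ℝ) → Matrix ι ι ℝ)
    (F : (ι → ℝ) → κ → ℝ) : Prop :=
  (∀ α, ContDiff ℝ (⊤ : ℕ∞) fun x => F x α) ∧
    IsCompact {x | ∀ α, F x α = 0} ∧ {x | ∀ α, F x α = 0}.Nonempty ∧
    (∀ x, (∀ α, F x α = 0) → IsUnit (gram g F x).det) ∧
    (∀ x, (∀ α, F x α = 0) → ∀ v, TangentTo F x v → v ≠ 0 → 0 < sq g x v v)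

/-- Future-trapped: every future-pointing causal normal has negative expansion. -/
def FutureTrapped (g : (ι → ℝ) → Matrix ι ι ℝ) (T : (ι → ℝ) → ι → ℝ)
    (F : (ι → ℝ) → κ → ℝ) : Prop :=
  ∀ x, (∀ α, F x α = 0) → ∀ c : κ → ℝ,
    FutureCausal g T x (NormalComb g F x c) → expansionCoeff g F x c < 0

/-! ### Warped products -/

def basePt {d₁ d₂ : ℕ} (x : (Fin d₁ ⊕ Fin d₂) → ℝ) : Fin d₁ → ℝ :=
  fun a => x (Sum.inl a)

def fibPt {d₁ d₂ : ℕ} (x : (Fin d₁ ⊕ Fin d₂) → ℝ) : Fin d₂ → ℝ :=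
  fun i => x (Sum.inr i)

/-- The warped product metric `g = ĝ + f² ḡ` in adapted coordinates. -/
def warped {d₁ d₂ : ℕ} (gB : (Fin d₁ → ℝ) → Matrix (Fin d₁) (Fin d₁) ℝ)
    (gF : (Fin d₂ → ℝ) → Matrix (Fin d₂) (Fin d₂) ℝ) (f : (Fin d₁ → ℝ) → ℝ) :
    ((Fin d₁ ⊕ Fin d₂) → ℝ) → Matrix (Fin d₁ ⊕ Fin d₂) (Fin d₁ ⊕ Fin d₂) ℝ :=
  fun x => Matrix.of fun μ ν =>
    match μ, ν with
    | Sum.inl a, Sum.inl b => gB (basePt x) a b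
    | Sum.inl _, Sum.inr _ => 0
    | Sum.inr _, Sum.inl _ => 0
    | Sum.inr i, Sum.inr j => (f (basePt x)) ^ 2 * gF (fibPt x) i j

/-- Projection of a spacetime curve to the base. -/
def baseCurve {d₁ d₂ : ℕ} (γ : ℝ → (Fin d₁ ⊕ Fin d₂) → ℝ) : ℝ → Fin d₁ → ℝ :=
  fun u => basePt (γ u)

/-- Projection of a spacetime curve to the fiber. -/
def fibCurve {d₁ d₂ : ℕ} (γ : ℝ → (Fin d₁ ⊕ Fin d₂) → ℝ) : ℝ → Fin d₂ → ℝ :=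
  fun u => fibPt (γ u)

/-- Lift of a base vector to the warped product (vanishing fiber components). -/
def liftVec {d₁ d₂ : ℕ} (v : Fin d₁ → ℝ) : (Fin d₁ ⊕ Fin d₂) → ℝ :=
  fun μ => match μ with
  | Sum.inl a => v a
  | Sum.inr _ => 0

/-- Lift of a base vector field (e.g. a time orientation) to the warped product. -/
def liftT {d₁ d₂ : ℕ} (T : (Fin d₁ → ℝ) → Fin d₁ → ℝ) :
    ((Fin d₁ ⊕ Fin d₂) → ℝ) → (Fin d₁ ⊕ Fin d₂) → ℝ :=
  fun x => liftVec (T (basePt x))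

/-- Defining map of the lift `ζ_p ⊆ Y_p` of the submanifold `{Fb = 0} ⊆ Y`. -/
def liftF {d₁ d₂ m' : ℕ} (p : Fin d₁ → ℝ) (Fb : (Fin d₂ → ℝ) → Fin m' → ℝ) :
    ((Fin d₁ ⊕ Fin d₂) → ℝ) → (Fin d₁ ⊕ Fin m') → ℝ :=
  fun x α => match α with
  | Sum.inl a => x (Sum.inl a) - p a
  | Sum.inr β => Fb (fibPt x) β

/-- Covariant Hessian `∇_μ∇_ν f` of a scalar function. -/
def hess (g : (ι → ℝ) → Matrix ι ι ℝ) (f : (ι → ℝ) → ℝ) (μ ν : ι) (x : ι → ℝ) : ℝ :=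
  pd (fun y => pd f ν y) μ x - ∑ lam, Γc g lam μ ν x * pd f lam x

/-- `∇^μ f ∇_μ f`. -/
def gradSq (g : (ι → ℝ) → Matrix ι ι ℝ) (f : (ι → ℝ) → ℝ) (x : ι → ℝ) : ℝ :=
  ∑ μ, ∑ ν, ginv g x μ ν * pd f μ x * pd f ν x

/-! ### Parametrized submanifolds and their expansions -/

/-- Partial derivative of a parametrization `φ`. -/
def dpar {k : ℕ} (φ : (Fin k → ℝ) → ι → ℝ) (A : Fin k) (μ : ι)
    (y : Fin k → ℝ) : ℝ :=
  fderiv ℝ (fun z => φ z μ) y (Pi.single A 1)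

/-- First fundamental form of a parametrized submanifold. -/
def firstFF {k : ℕ} (g : (ι → ℝ) → Matrix ι ι ℝ) (φ : (Fin k → ℝ) → ι → ℝ)
    (y : Fin k → ℝ) : Matrix (Fin k) (Fin k) ℝ :=
  Matrix.of fun A B => ∑ μ, ∑ ν, g (φ y) μ ν * dpar φ A μ y * dpar φ B ν y

/-- The expansion `θ(n) = n_μ H^μ` of a parametrized submanifold along a normal `n`,
via `θ(n) = −γ^{AB} n_μ (∂_A∂_B φ^μ + Γ^μ_{ρσ} ∂_A φ^ρ ∂_B φ^σ)`. -/
def expansionPar {k : ℕ} (g : (ι → ℝ) → Matrix ι ι ℝ) (φ : (Fin k → ℝ) → ι → ℝ)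
    (y : Fin k → ℝ) (n : ι → ℝ) : ℝ :=
  - ∑ A, ∑ B, (firstFF g φ y)⁻¹ A B *
      ∑ μ, (∑ ν, g (φ y) μ ν * n ν) *
        (fderiv ℝ (fun z => dpar φ B μ z) y (Pi.single A 1)
          + ∑ ρ, ∑ σ, Γc g μ ρ σ (φ y) * dpar φ A ρ y * dpar φ B σ y)

/-- The field `ℰ̂^a := Ê^a − f h N̂^a` along the base projection. -/
def calE {d₁ d₂ : ℕ} (f : (Fin d₁ → ℝ) → ℝ) (γ : ℝ → (Fin d₁ ⊕ Fin d₂) → ℝ)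
    (E : ℝ → (Fin d₁ ⊕ Fin d₂) → ℝ) (h : ℝ → ℝ) : ℝ → Fin d₁ → ℝ :=
  fun u a => E u (Sum.inl a) - f (basePt (γ u)) * h u * vel (baseCurve γ) u a

/-- Proper-time rate `s = √(−ĝ(N̂,N̂)) = √C / f` along the base projection. -/
def fwS {d₁ d₂ : ℕ} (f : (Fin d₁ → ℝ) → ℝ) (C : ℝ)
    (γ : ℝ → (Fin d₁ ⊕ Fin d₂) → ℝ) (u : ℝ) : ℝ :=
  Real.sqrt C / f (basePt (γ u))

/-- Unit tangent of the (timelike) base projection. -/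
def fwU {d₁ d₂ : ℕ} (f : (Fin d₁ → ℝ) → ℝ) (C : ℝ)
    (γ : ℝ → (Fin d₁ ⊕ Fin d₂) → ℝ) (u : ℝ) : Fin d₁ → ℝ :=
  fun a => (fwS f C γ u)⁻¹ * vel (baseCurve γ) u a

/-- Acceleration (wrt proper time) of the base projection. -/
def fwA {d₁ d₂ : ℕ} (gB : (Fin d₁ → ℝ) → Matrix (Fin d₁) (Fin d₁) ℝ)
    (f : (Fin d₁ → ℝ) → ℝ) (C : ℝ)
    (γ : ℝ → (Fin d₁ ⊕ Fin d₂) → ℝ) (u : ℝ) : Fin d₁ → ℝ :=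
  fun a => (fwS f C γ u)⁻¹ * covD gB (baseCurve γ) (fun w => fwU f C γ w) u a

/-! In a warped product the fiber momentum `f² N̄` of a geodesic is parallel along the fiber
projection, and so is `f Ē - h f² N̄`. The latter vanishes initially, hence always, which gives
`Ē = f h N̄`. With `φ = 1/f`, the pairs `(Ê, h)` and `(N̂, φ)` then solve the same linear system
`∇̂V = -C h grad φ`, `dh/du = dφ(V)` on the base, so `ĝ(V, W) + C h k` is constant for any two of
its solutions `(V, h)` and `(W, k)`. Subtracting `f h` times the second pair from the first cancels
the gradient term, so that `∇̂ℰ̂` is proportional to `N̂`; since `ℰ̂` is also orthogonal to `N̂`,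
this is Fermi–Walker transport. -/

open scoped Matrix

section LinearODE

lemma eq_zero_of_hasDerivAt_clm_apply {F : Type*} [NormedAddCommGroup F] [NormedSpace ℝ F]
    {A : ℝ → F →L[ℝ] F} (hA : Continuous A) {Y : ℝ → F} (hY : ∀ u, HasDerivAt Y (A u (Y u)) u)
    {t₀ : ℝ} (h₀ : Y t₀ = 0) : Y = 0 := by
  funext u
  obtain ⟨K, hK⟩ := (isCompact_Icc (a := min t₀ u - 1)
    (b := max t₀ u + 1)).exists_bound_of_continuousOn hA.continuousOn
  have lipschitz : ∀ t ∈ Set.Ioo (min t₀ u - 1) (max t₀ u + 1),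
      LipschitzOnWith K.toNNReal (A t) Set.univ := fun t ht =>
    ((A t).lipschitz.weaken
      (NNReal.le_toNNReal_of_coe_le (hK t (Set.Ioo_subset_Icc_self ht)))).lipschitzOnWith
  refine ODE_solution_unique_of_mem_Ioo (t₀ := t₀) (g := 0) lipschitz ⟨?_, ?_⟩
    (fun t _ => ⟨hY t, Set.mem_univ _⟩)
    (fun t _ => ⟨by simp [hasDerivAt_zero], Set.mem_univ _⟩) h₀ ⟨?_, ?_⟩
  · linarith [min_le_left t₀ u]
  · linarith [le_max_left t₀ u]
  · linarith [min_le_right t₀ u]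
  · linarith [le_max_right t₀ u]

end LinearODE

section Curves

variable {α : Type*}

lemma SmoothCurve.differentiable {c : ℝ → α → ℝ} (hc : SmoothCurve c) : Differentiable ℝ c :=
  differentiable_pi.2 fun μ => (hc μ).differentiable (by simp)

lemma SmoothCurve.smoothCurve_vel {c : ℝ → α → ℝ} (hc : SmoothCurve c) : SmoothCurve (vel c) :=
  fun μ => (contDiff_infty_iff_deriv.1 (hc μ)).2

lemma hasDerivAt_vel {c : ℝ → α → ℝ} {u : ℝ} (hc : DifferentiableAt ℝ c u) :
    HasDerivAt c (vel c u) u :=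
  hasDerivAt_pi.2 fun μ => (differentiableAt_pi.1 hc μ).hasDerivAt

lemma hasDerivAt_comp_curve [Finite α] {F : (α → ℝ) → ℝ} {c : ℝ → α → ℝ} {u : ℝ}
    (hF : DifferentiableAt ℝ F (c u)) (hc : DifferentiableAt ℝ c u) :
    HasDerivAt (fun w => F (c w)) (fderiv ℝ F (c u) (vel c u)) u := by
  have := Fintype.ofFinite α
  exact hF.hasFDerivAt.comp_hasDerivAt u (hasDerivAt_vel hc)

lemma fderiv_apply_eq_sum_pd (F : (ι → ℝ) → ℝ) (x v : ι → ℝ) :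
    fderiv ℝ F x v = ∑ ρ, pd F ρ x * v ρ := by
  conv_lhs => rw [pi_eq_sum_univ' v, map_sum]
  simp only [map_smul, smul_eq_mul, mul_comm, pd]

lemma fderiv_inv_apply [Finite α] {F : (α → ℝ) → ℝ} {x : α → ℝ} (hF : DifferentiableAt ℝ F x)
    (hx : F x ≠ 0) (v : α → ℝ) :
    fderiv ℝ (fun y => (F y)⁻¹) x v = -(F x ^ 2)⁻¹ * fderiv ℝ F x v := by
  have := Fintype.ofFinite α
  exact congrArg (· v) ((hasDerivAt_inv hx).comp_hasFDerivAt x hF.hasFDerivAt).fderiv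

lemma continuous_pd {F : (ι → ℝ) → ℝ} (hF : ContDiff ℝ (⊤ : ℕ∞) F) (ρ : ι) :
    Continuous (pd F ρ) :=
  (hF.continuous_fderiv (by simp)).clm_apply continuous_const

end Curves

section ScalarProduct

variable {α : Type*} [Fintype α] {g : (ι → ℝ) → Matrix ι ι ℝ}

lemma SmoothMetric.differentiable_apply (hg : SmoothMetric g) (μ ν : ι) :
    Differentiable ℝ fun x => g x μ ν :=
  (hg.1 μ ν).differentiable (by simp)

lemma sq_eq_dotProduct_mulVec (g : (α → ℝ) → Matrix α α ℝ) (x v w : α → ℝ) :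
    sq g x v w = v ⬝ᵥ g x *ᵥ w := by
  simp only [sq, dotProduct, Matrix.mulVec, Finset.mul_sum]
  exact Finset.sum_congr rfl fun μ _ => Finset.sum_congr rfl fun ν _ => by ring

lemma sq_comm (hg : SmoothMetric g) (x v w : ι → ℝ) : sq g x v w = sq g x w v := by
  rw [sq, Finset.sum_comm, sq]
  exact Finset.sum_congr rfl fun μ _ => Finset.sum_congr rfl fun ν _ => by
    rw [hg.2.1 x ν μ]; ring

lemma sq_add_left (g : (α → ℝ) → Matrix α α ℝ) (x v v' w : α → ℝ) :
    sq g x (v + v') w = sq g x v w + sq g x v' w := by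
  simp only [sq_eq_dotProduct_mulVec, add_dotProduct]

lemma sq_add_right (g : (α → ℝ) → Matrix α α ℝ) (x v w w' : α → ℝ) :
    sq g x v (w + w') = sq g x v w + sq g x v w' := by
  simp only [sq_eq_dotProduct_mulVec, Matrix.mulVec_add, dotProduct_add]

lemma sq_sub_left (g : (α → ℝ) → Matrix α α ℝ) (x v v' w : α → ℝ) :
    sq g x (v - v') w = sq g x v w - sq g x v' w := by
  simp only [sq_eq_dotProduct_mulVec, sub_dotProduct]

lemma sq_sub_right (g : (α → ℝ) → Matrix α α ℝ) (x v w w' : α → ℝ) :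
    sq g x v (w - w') = sq g x v w - sq g x v w' := by
  simp only [sq_eq_dotProduct_mulVec, Matrix.mulVec_sub, dotProduct_sub]

lemma sq_smul_left (g : (α → ℝ) → Matrix α α ℝ) (x : α → ℝ) (k : ℝ) (v w : α → ℝ) :
    sq g x (k • v) w = k * sq g x v w := by
  simp only [sq_eq_dotProduct_mulVec, smul_dotProduct, smul_eq_mul]

lemma sq_smul_right (g : (α → ℝ) → Matrix α α ℝ) (x : α → ℝ) (k : ℝ) (v w : α → ℝ) :
    sq g x v (k • w) = k * sq g x v w := by
  simp only [sq_eq_dotProduct_mulVec, Matrix.mulVec_smul, dotProduct_smul, smul_eq_mul]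

lemma gradVec_eq_mulVec (g : (ι → ℝ) → Matrix ι ι ℝ) (φ : (ι → ℝ) → ℝ) (x : ι → ℝ) :
    gradVec g φ x = ginv g x *ᵥ fun ν => pd φ ν x := rfl

lemma sq_gradVec_right (hg : SmoothMetric g) (φ : (ι → ℝ) → ℝ) (x v : ι → ℝ) :
    sq g x v (gradVec g φ x) = fderiv ℝ φ x v := by
  rw [sq_eq_dotProduct_mulVec, gradVec_eq_mulVec, Matrix.mulVec_mulVec, ginv,
    Matrix.mul_nonsing_inv _ (hg.2.2 x), Matrix.one_mulVec, dotProduct_comm,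
    fderiv_apply_eq_sum_pd, dotProduct]

lemma gradVec_inv (g : (ι → ℝ) → Matrix ι ι ℝ) {F : (ι → ℝ) → ℝ} {x : ι → ℝ}
    (hF : DifferentiableAt ℝ F x) (hx : F x ≠ 0) :
    gradVec g (fun y => (F y)⁻¹) x = -(F x ^ 2)⁻¹ • gradVec g F x := by
  rw [gradVec_eq_mulVec, gradVec_eq_mulVec, ← Matrix.mulVec_smul]
  exact congrArg _ (funext fun ν => fderiv_inv_apply hF hx _)

lemma continuous_ginv (hg : SmoothMetric g) : Continuous (ginv g) := by
  have hcont : Continuous g :=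
    continuous_pi fun μ => continuous_pi fun ν => (hg.1 μ ν).continuous
  refine continuous_iff_continuousAt.2 fun x => ?_
  refine (continuousAt_matrix_inv (g x) ?_).comp hcont.continuousAt
  rw [Ring.inverse_eq_inv']
  exact continuousAt_inv₀ (hg.2.2 x).ne_zero

end ScalarProduct

section Connection

variable {g : (ι → ℝ) → Matrix ι ι ℝ}

/-- The matrix `Γ_{λρσ} n^ρ` (rows `λ`, columns `σ`) of the Levi-Civita connection of `g` in the
direction `n`, with the upper index of the Christoffel symbols lowered. -/
def connMatrixLow (g : (ι → ℝ) → Matrix ι ι ℝ) (x n : ι → ℝ) : Matrix ι ι ℝ :=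
  Matrix.of fun lam σ => 1 / 2 * ∑ ρ, (pd (fun y => g y lam σ) ρ x + pd (fun y => g y lam ρ) σ x
    - pd (fun y => g y ρ σ) lam x) * n ρ

/-- The matrix `Γ^μ_{ρσ} n^ρ` (rows `μ`, columns `σ`) of the Levi-Civita connection of `g` in the
direction `n`: along a curve, the covariant derivative is the ordinary derivative plus
multiplication by this matrix in the direction of the velocity. -/
def connMatrix (g : (ι → ℝ) → Matrix ι ι ℝ) (x n : ι → ℝ) : Matrix ι ι ℝ :=
  ginv g x * connMatrixLow g x n

lemma connMatrix_apply (g : (ι → ℝ) → Matrix ι ι ℝ) (x n : ι → ℝ) (μ σ : ι) :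
    connMatrix g x n μ σ = ∑ ρ, Γc g μ ρ σ x * n ρ := by
  simp only [connMatrix, connMatrixLow, Matrix.mul_apply, Matrix.of_apply, Γc, Finset.mul_sum,
    Finset.sum_mul]
  rw [Finset.sum_comm]
  exact Finset.sum_congr rfl fun ρ _ => Finset.sum_congr rfl fun lam _ => by ring

lemma mul_connMatrix (hg : SmoothMetric g) (x n : ι → ℝ) :
    g x * connMatrix g x n = connMatrixLow g x n := by
  rw [connMatrix, ginv, Matrix.mul_nonsing_inv_cancel_left _ _ (hg.2.2 x)]

lemma fderiv_metric_apply (hg : SmoothMetric g) (x n : ι → ℝ) (μ ν : ι) :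
    fderiv ℝ (fun y => g y μ ν) x n = connMatrixLow g x n μ ν + connMatrixLow g x n ν μ := by
  have symm (α β : ι) : (fun y => g y α β) = fun y => g y β α := funext fun y => hg.2.1 y α β
  simp only [fderiv_apply_eq_sum_pd, connMatrixLow, Matrix.of_apply, ← mul_add,
    ← Finset.sum_add_distrib]
  rw [Finset.mul_sum]
  refine Finset.sum_congr rfl fun ρ _ => ?_
  rw [symm ν μ, symm ρ μ, symm ρ ν]
  ring

lemma sq_connMatrix_mulVec_right (hg : SmoothMetric g) (x n v w : ι → ℝ) :
    sq g x v (connMatrix g x n *ᵥ w) = ∑ μ, ∑ ν, connMatrixLow g x n μ ν * v μ * w ν := by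
  rw [sq_eq_dotProduct_mulVec, Matrix.mulVec_mulVec, mul_connMatrix hg]
  exact (sq_eq_dotProduct_mulVec (fun _ => connMatrixLow g x n) x v w).symm

lemma covD_eq_vel_add_mulVec (g : (ι → ℝ) → Matrix ι ι ℝ) (c V : ℝ → ι → ℝ) (u : ℝ) :
    covD g c V u = vel V u + connMatrix g (c u) (vel c u) *ᵥ V u := by
  funext μ
  simp only [covD, vel, Pi.add_apply, Matrix.mulVec, dotProduct, connMatrix_apply, Finset.sum_mul]
  rw [Finset.sum_comm]

lemma isParallel_iff {c V : ℝ → ι → ℝ} : IsParallel g c V ↔ ∀ u, covD g c V u = 0 :=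
  forall_congr' fun _ => funext_iff.symm

lemma covD_smul (g : (ι → ℝ) → Matrix ι ι ℝ) (c : ℝ → ι → ℝ) {φ : ℝ → ℝ} {V : ℝ → ι → ℝ}
    {φ' u : ℝ} (hφ : HasDerivAt φ φ' u) (hV : DifferentiableAt ℝ V u) :
    covD g c (fun w => φ w • V w) u = φ' • V u + φ u • covD g c V u := by
  have vel_smul : vel (fun w => φ w • V w) u = φ u • vel V u + φ' • V u :=
    (hasDerivAt_vel (hφ.differentiableAt.fun_smul hV)).unique (hφ.fun_smul (hasDerivAt_vel hV))
  rw [covD_eq_vel_add_mulVec, covD_eq_vel_add_mulVec, vel_smul, Matrix.mulVec_smul]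
  module

lemma covD_sub (g : (ι → ℝ) → Matrix ι ι ℝ) (c : ℝ → ι → ℝ) {V W : ℝ → ι → ℝ} {u : ℝ}
    (hV : DifferentiableAt ℝ V u) (hW : DifferentiableAt ℝ W u) :
    covD g c (fun w => V w - W w) u = covD g c V u - covD g c W u := by
  have vel_sub : vel (fun w => V w - W w) u = vel V u - vel W u :=
    (hasDerivAt_vel (hV.fun_sub hW)).unique ((hasDerivAt_vel hV).fun_sub (hasDerivAt_vel hW))
  simp only [covD_eq_vel_add_mulVec, vel_sub, Matrix.mulVec_sub]
  abel

lemma hasDerivAt_sq (hg : SmoothMetric g) {c V W : ℝ → ι → ℝ} {u : ℝ}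
    (hc : DifferentiableAt ℝ c u) (hV : DifferentiableAt ℝ V u) (hW : DifferentiableAt ℝ W u) :
    HasDerivAt (fun w => sq g (c w) (V w) (W w))
      (sq g (c u) (covD g c V u) (W u) + sq g (c u) (V u) (covD g c W u)) u := by
  have deriv_metric (μ ν : ι) : HasDerivAt (fun w => g (c w) μ ν)
      (connMatrixLow g (c u) (vel c u) μ ν + connMatrixLow g (c u) (vel c u) ν μ) u := by
    rw [← fderiv_metric_apply hg]
    exact hasDerivAt_comp_curve (hg.differentiable_apply μ ν _) hc
  have deriv_sum := HasDerivAt.fun_sum (u := Finset.univ) fun μ _ =>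
    HasDerivAt.fun_sum (u := Finset.univ) fun ν _ =>
      ((deriv_metric μ ν).fun_mul (hasDerivAt_pi.1 (hasDerivAt_vel hV) μ)).fun_mul
        (hasDerivAt_pi.1 (hasDerivAt_vel hW) ν)
  refine deriv_sum.congr_deriv ?_
  have swap : ∑ μ, ∑ ν, connMatrixLow g (c u) (vel c u) μ ν * W u μ * V u ν =
      ∑ μ, ∑ ν, connMatrixLow g (c u) (vel c u) ν μ * W u ν * V u μ := Finset.sum_comm
  rw [covD_eq_vel_add_mulVec, covD_eq_vel_add_mulVec, sq_add_left, sq_add_right,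
    sq_comm hg _ (connMatrix _ _ _ *ᵥ _), sq_connMatrix_mulVec_right hg,
    sq_connMatrix_mulVec_right hg, swap]
  simp only [sq, ← Finset.sum_add_distrib]
  exact Finset.sum_congr rfl fun μ _ => Finset.sum_congr rfl fun ν _ => by ring

lemma continuous_connMatrix_vel (hg : SmoothMetric g) {c : ℝ → ι → ℝ} (hc : SmoothCurve c) :
    Continuous fun u => connMatrix g (c u) (vel c u) := by
  have hcont := hc.differentiable.continuous
  refine ((continuous_ginv hg).comp hcont).matrix_mul
    (continuous_pi fun lam => continuous_pi fun σ => ?_)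
  have hpd (α β ρ : ι) : Continuous fun u => pd (fun y => g y α β) ρ (c u) :=
    (continuous_pd (hg.1 α β) ρ).comp hcont
  exact continuous_const.mul (continuous_finsetSum _ fun ρ _ =>
    (((hpd _ _ _).add (hpd _ _ _)).sub (hpd _ _ _)).mul (hc.smoothCurve_vel ρ).continuous)

lemma IsParallel.eq_zero (hg : SmoothMetric g) {c V : ℝ → ι → ℝ} (hc : SmoothCurve c)
    (hV : Differentiable ℝ V) (hpar : IsParallel g c V) {t₀ : ℝ} (h₀ : V t₀ = 0) : V = 0 := by
  let toCLM : Matrix ι ι ℝ →ₗ[ℝ] (ι → ℝ) →L[ℝ] (ι → ℝ) :=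
    LinearMap.toContinuousLinearMap.toLinearMap ∘ₗ Matrix.toLin'.toLinearMap
  have hcont : Continuous fun u => toCLM (-connMatrix g (c u) (vel c u)) :=
    toCLM.continuous_of_finiteDimensional.comp (continuous_connMatrix_vel hg hc).neg
  refine eq_zero_of_hasDerivAt_clm_apply hcont (fun u => ?_) h₀
  have hzero : vel V u + connMatrix g (c u) (vel c u) *ᵥ V u = 0 := by
    rw [← covD_eq_vel_add_mulVec, isParallel_iff.1 hpar]
  refine (hasDerivAt_vel (hV u)).congr_deriv ?_
  change vel V u = (-connMatrix g (c u) (vel c u)) *ᵥ V u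
  rw [Matrix.neg_mulVec, eq_neg_of_add_eq_zero_left hzero]

end Connection

section FermiWalker

variable {g : (ι → ℝ) → Matrix ι ι ℝ}

/-- The tangent of the curve `c` rescaled by the rate `s`; it has unit length when `s` is the speed
of `c`, that is `g(ċ, ċ) = ±s²`. -/
def unitTangent (c : ℝ → ι → ℝ) (s : ℝ → ℝ) (u : ℝ) : ι → ℝ :=
  (s u)⁻¹ • vel c u

/-- The acceleration of `c` with respect to the arclength (or proper time) of rate `s`. -/
def acceleration (g : (ι → ℝ) → Matrix ι ι ℝ) (c : ℝ → ι → ℝ) (s : ℝ → ℝ) (u : ℝ) : ι → ℝ :=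
  (s u)⁻¹ • covD g c (unitTangent c s) u

/-- The Fermi–Walker transport equation for the field `V` along the timelike curve `c` of speed `s`
at parameter value `u`; the factor `s⁻¹` converts the derivative to proper time. -/
def FermiWalkerAt (g : (ι → ℝ) → Matrix ι ι ℝ) (c : ℝ → ι → ℝ) (s : ℝ → ℝ) (V : ℝ → ι → ℝ)
    (u : ℝ) : Prop :=
  (s u)⁻¹ • covD g c V u = sq g (c u) (V u) (acceleration g c s u) • unitTangent c s u
    - sq g (c u) (V u) (unitTangent c s u) • acceleration g c s u

lemma sq_acceleration_of_orthogonal {c V : ℝ → ι → ℝ} {s : ℝ → ℝ} {u : ℝ}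
    (hN : DifferentiableAt ℝ (vel c) u) (hs : DifferentiableAt ℝ s u) (hsu : s u ≠ 0)
    (horth : sq g (c u) (V u) (vel c u) = 0) :
    sq g (c u) (V u) (acceleration g c s u) =
      sq g (c u) (V u) (covD g c (vel c) u) / s u ^ 2 := by
  have hDU := covD_smul g c (hs.hasDerivAt.fun_inv hsu) hN
  rw [acceleration, show unitTangent c s = fun w => (s w)⁻¹ • vel c w from rfl, hDU]
  simp only [sq_smul_right, sq_add_right, horth]
  field_simp
  ring

lemma fermiWalkerAt_of_covD_eq_smul_vel (hg : SmoothMetric g) {c V : ℝ → ι → ℝ} {s : ℝ → ℝ}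
    {k u : ℝ} (hc : DifferentiableAt ℝ c u) (hN : DifferentiableAt ℝ (vel c) u)
    (hV : DifferentiableAt ℝ V u) (hs : DifferentiableAt ℝ s u) (hsu : s u ≠ 0)
    (hspeed : sq g (c u) (vel c u) (vel c u) = -s u ^ 2)
    (horth : ∀ w, sq g (c w) (vel c w) (V w) = 0) (hDV : covD g c V u = k • vel c u) :
    FermiWalkerAt g c s V u := by
  have horth' : sq g (c u) (V u) (vel c u) = 0 := by rw [sq_comm hg, horth]
  have deriv_orth : sq g (c u) (covD g c (vel c) u) (V u)
      + sq g (c u) (vel c u) (covD g c V u) = 0 :=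
    (hasDerivAt_sq hg hc hN hV).unique (by simpa only [horth] using hasDerivAt_const u (0 : ℝ))
  have sq_covD_vel : sq g (c u) (V u) (covD g c (vel c) u) = k * s u ^ 2 := by
    rw [hDV, sq_smul_right, hspeed, sq_comm hg] at deriv_orth
    linarith
  rw [FermiWalkerAt, sq_acceleration_of_orthogonal hN hs hsu horth', sq_covD_vel, hDV,
    mul_div_cancel_right₀ _ (pow_ne_zero 2 hsu), unitTangent, sq_smul_right, horth', mul_zero,
    zero_smul, sub_zero, smul_comm]

end FermiWalker

section ReducedParallelTransport

variable {g : (ι → ℝ) → Matrix ι ι ℝ} {φ : (ι → ℝ) → ℝ} {C : ℝ} {c V W : ℝ → ι → ℝ}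
  {h k : ℝ → ℝ}

/-- Parallel transport along a null geodesic of a warped product, reduced to the base: `c` is the
base projection of the geodesic, `φ = 1/f` the inverse warping function, and the transported
vector has base part `V` and fiber part `f h N̄`, where `N̄` is the fiber part of the tangent. -/
structure IsReducedParallel (g : (ι → ℝ) → Matrix ι ι ℝ) (φ : (ι → ℝ) → ℝ) (C : ℝ)
    (c V : ℝ → ι → ℝ) (h : ℝ → ℝ) : Prop where
  differentiable : Differentiable ℝ V
  covD_eq (u : ℝ) : covD g c V u = -(C * h u) • gradVec g φ (c u)
  hasDerivAt (u : ℝ) : HasDerivAt h (fderiv ℝ φ (c u) (V u)) u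

namespace IsReducedParallel

lemma sq_add_mul_eq (hg : SmoothMetric g) (hc : Differentiable ℝ c)
    (hV : IsReducedParallel g φ C c V h) (hW : IsReducedParallel g φ C c W k) (u t₀ : ℝ) :
    sq g (c u) (V u) (W u) + C * (h u * k u) =
      sq g (c t₀) (V t₀) (W t₀) + C * (h t₀ * k t₀) := by
  have deriv_pairing (t : ℝ) :
      HasDerivAt (fun w => sq g (c w) (V w) (W w) + C * (h w * k w)) 0 t := by
    refine ((hasDerivAt_sq hg (hc t) (hV.differentiable t) (hW.differentiable t)).fun_add
      (((hV.hasDerivAt t).fun_mul (hW.hasDerivAt t)).const_mul C)).congr_deriv ?_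
    rw [hV.covD_eq, hW.covD_eq, sq_smul_left, sq_smul_right, sq_gradVec_right hg,
      sq_comm hg _ (gradVec _ _ _), sq_gradVec_right hg]
    ring
  exact is_const_of_deriv_eq_zero (fun t => (deriv_pairing t).differentiableAt)
    (fun t => (deriv_pairing t).deriv) u t₀

lemma sq_add_mul_eq_of_eq_zero (hg : SmoothMetric g) (hc : Differentiable ℝ c)
    (hV : IsReducedParallel g φ C c V h) (hW : IsReducedParallel g φ C c W k) {t₀ : ℝ}
    (hk₀ : k t₀ = 0) (u : ℝ) :
    sq g (c u) (V u) (W u) + C * (h u * k u) = sq g (c t₀) (V t₀) (W t₀) := by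
  rw [hV.sq_add_mul_eq hg hc hW u t₀, hk₀, mul_zero, mul_zero, add_zero]

lemma covD_sub_smul (hV : IsReducedParallel g φ C c V h) (hW : IsReducedParallel g φ C c W k)
    {r : ℝ → ℝ} {r' u : ℝ} (hr : HasDerivAt r r' u) (hrk : r u * k u = h u) :
    covD g c (fun w => V w - r w • W w) u = -r' • W u := by
  rw [covD_sub g c (hV.differentiable u) (hr.differentiableAt.fun_smul (hW.differentiable u)),
    covD_smul g c hr (hW.differentiable u), hV.covD_eq, hW.covD_eq, ← hrk]
  module

end IsReducedParallel

end ReducedParallelTransport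

section WarpedProduct

variable {d₁ d₂ : ℕ}

lemma hasFDerivAt_comp_basePt {F : (Fin d₁ → ℝ) → ℝ} {x : Fin d₁ ⊕ Fin d₂ → ℝ}
    (hF : DifferentiableAt ℝ F (basePt x)) :
    HasFDerivAt (fun y => F (basePt y))
      (fderiv ℝ F (basePt x) ∘L (LinearMap.funLeft ℝ ℝ Sum.inl).toContinuousLinearMap) x :=
  hF.hasFDerivAt.comp x (LinearMap.funLeft ℝ ℝ Sum.inl).toContinuousLinearMap.hasFDerivAt

lemma hasFDerivAt_comp_fibPt {F : (Fin d₂ → ℝ) → ℝ} {x : Fin d₁ ⊕ Fin d₂ → ℝ}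
    (hF : DifferentiableAt ℝ F (fibPt x)) :
    HasFDerivAt (fun y => F (fibPt y))
      (fderiv ℝ F (fibPt x) ∘L (LinearMap.funLeft ℝ ℝ Sum.inr).toContinuousLinearMap) x :=
  hF.hasFDerivAt.comp x (LinearMap.funLeft ℝ ℝ Sum.inr).toContinuousLinearMap.hasFDerivAt

lemma fderiv_comp_basePt {F : (Fin d₁ → ℝ) → ℝ} {x : Fin d₁ ⊕ Fin d₂ → ℝ}
    (hF : DifferentiableAt ℝ F (basePt x)) (v : Fin d₁ ⊕ Fin d₂ → ℝ) :
    fderiv ℝ (fun y => F (basePt y)) x v = fderiv ℝ F (basePt x) (basePt v) := by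
  rw [(hasFDerivAt_comp_basePt hF).fderiv]
  rfl

lemma fderiv_comp_fibPt {F : (Fin d₂ → ℝ) → ℝ} {x : Fin d₁ ⊕ Fin d₂ → ℝ}
    (hF : DifferentiableAt ℝ F (fibPt x)) (v : Fin d₁ ⊕ Fin d₂ → ℝ) :
    fderiv ℝ (fun y => F (fibPt y)) x v = fderiv ℝ F (fibPt x) (fibPt v) := by
  rw [(hasFDerivAt_comp_fibPt hF).fderiv]
  rfl

lemma fderiv_sq_mul_fib {f : (Fin d₁ → ℝ) → ℝ} {G : (Fin d₂ → ℝ) → ℝ}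
    {x : Fin d₁ ⊕ Fin d₂ → ℝ} (hf : DifferentiableAt ℝ f (basePt x))
    (hG : DifferentiableAt ℝ G (fibPt x)) (v : Fin d₁ ⊕ Fin d₂ → ℝ) :
    fderiv ℝ (fun y => f (basePt y) ^ 2 * G (fibPt y)) x v =
      2 * f (basePt x) * fderiv ℝ f (basePt x) (basePt v) * G (fibPt x)
        + f (basePt x) ^ 2 * fderiv ℝ G (fibPt x) (fibPt v) := by
  have hf' := (hasFDerivAt_comp_basePt hf).differentiableAt
  rw [fderiv_fun_mul (hf'.fun_pow 2) (hasFDerivAt_comp_fibPt hG).differentiableAt,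
    fderiv_fun_pow 2 hf']
  simp only [add_apply, smul_apply, smul_eq_mul, nsmul_eq_mul, fderiv_comp_basePt hf,
    fderiv_comp_fibPt hG, Nat.add_one_sub_one, pow_one]
  push_cast
  ring

lemma basePt_single_inl (a : Fin d₁) :
    basePt (Pi.single (Sum.inl a) 1 : Fin d₁ ⊕ Fin d₂ → ℝ) = Pi.single a 1 := by
  ext b
  simp [basePt, Pi.single_apply]

lemma basePt_single_inr (i : Fin d₂) :
    basePt (Pi.single (Sum.inr i) 1 : Fin d₁ ⊕ Fin d₂ → ℝ) = 0 := by
  ext b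
  simp [basePt]

lemma fibPt_single_inl (a : Fin d₁) :
    fibPt (Pi.single (Sum.inl a) 1 : Fin d₁ ⊕ Fin d₂ → ℝ) = 0 := by
  ext j
  simp [fibPt]

lemma fibPt_single_inr (i : Fin d₂) :
    fibPt (Pi.single (Sum.inr i) 1 : Fin d₁ ⊕ Fin d₂ → ℝ) = Pi.single i 1 := by
  ext j
  simp [fibPt, Pi.single_apply]

lemma pd_comp_basePt_inl {F : (Fin d₁ → ℝ) → ℝ} {x : Fin d₁ ⊕ Fin d₂ → ℝ}
    (hF : DifferentiableAt ℝ F (basePt x)) (a : Fin d₁) :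
    pd (fun y => F (basePt y)) (Sum.inl a) x = pd F a (basePt x) := by
  rw [pd, fderiv_comp_basePt hF, basePt_single_inl, pd]

lemma pd_comp_basePt_inr {F : (Fin d₁ → ℝ) → ℝ} {x : Fin d₁ ⊕ Fin d₂ → ℝ}
    (hF : DifferentiableAt ℝ F (basePt x)) (i : Fin d₂) :
    pd (fun y => F (basePt y)) (Sum.inr i) x = 0 := by
  rw [pd, fderiv_comp_basePt hF, basePt_single_inr, map_zero]

lemma pd_sq_mul_fib_inl {f : (Fin d₁ → ℝ) → ℝ} {G : (Fin d₂ → ℝ) → ℝ}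
    {x : Fin d₁ ⊕ Fin d₂ → ℝ} (hf : DifferentiableAt ℝ f (basePt x))
    (hG : DifferentiableAt ℝ G (fibPt x)) (a : Fin d₁) :
    pd (fun y => f (basePt y) ^ 2 * G (fibPt y)) (Sum.inl a) x =
      2 * f (basePt x) * pd f a (basePt x) * G (fibPt x) := by
  rw [pd, fderiv_sq_mul_fib hf hG, basePt_single_inl, fibPt_single_inl, map_zero, mul_zero,
    add_zero, pd]

lemma pd_sq_mul_fib_inr {f : (Fin d₁ → ℝ) → ℝ} {G : (Fin d₂ → ℝ) → ℝ}
    {x : Fin d₁ ⊕ Fin d₂ → ℝ} (hf : DifferentiableAt ℝ f (basePt x))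
    (hG : DifferentiableAt ℝ G (fibPt x)) (i : Fin d₂) :
    pd (fun y => f (basePt y) ^ 2 * G (fibPt y)) (Sum.inr i) x =
      f (basePt x) ^ 2 * pd G i (fibPt x) := by
  rw [pd, fderiv_sq_mul_fib hf hG, basePt_single_inr, fibPt_single_inr, map_zero, mul_zero,
    zero_mul, zero_add, pd]

variable {gB : (Fin d₁ → ℝ) → Matrix (Fin d₁) (Fin d₁) ℝ}
  {gF : (Fin d₂ → ℝ) → Matrix (Fin d₂) (Fin d₂) ℝ} {f : (Fin d₁ → ℝ) → ℝ}

lemma warped_eq_fromBlocks (gB : (Fin d₁ → ℝ) → Matrix (Fin d₁) (Fin d₁) ℝ)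
    (gF : (Fin d₂ → ℝ) → Matrix (Fin d₂) (Fin d₂) ℝ) (f : (Fin d₁ → ℝ) → ℝ)
    (x : Fin d₁ ⊕ Fin d₂ → ℝ) :
    warped gB gF f x =
      Matrix.fromBlocks (gB (basePt x)) 0 0 (f (basePt x) ^ 2 • gF (fibPt x)) := by
  ext (a | i) (b | j) <;> rfl

lemma ginv_warped (hB : SmoothMetric gB) (hF : SmoothMetric gF) {x : Fin d₁ ⊕ Fin d₂ → ℝ}
    (hfx : f (basePt x) ≠ 0) :
    ginv (warped gB gF f) x = Matrix.fromBlocks (ginv gB (basePt x)) 0 0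
      ((f (basePt x) ^ 2)⁻¹ • ginv gF (fibPt x)) := by
  refine Matrix.inv_eq_right_inv ?_
  rw [warped_eq_fromBlocks, Matrix.fromBlocks_multiply]
  simp [ginv, Matrix.mul_nonsing_inv _ (hB.2.2 _), Matrix.mul_nonsing_inv _ (hF.2.2 _), smul_smul,
    hfx]

lemma sq_warped (gB : (Fin d₁ → ℝ) → Matrix (Fin d₁) (Fin d₁) ℝ)
    (gF : (Fin d₂ → ℝ) → Matrix (Fin d₂) (Fin d₂) ℝ) (f : (Fin d₁ → ℝ) → ℝ)
    (x v w : Fin d₁ ⊕ Fin d₂ → ℝ) :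
    sq (warped gB gF f) x v w = sq gB (basePt x) (basePt v) (basePt w)
      + f (basePt x) ^ 2 * sq gF (fibPt x) (fibPt v) (fibPt w) := by
  simp only [sq_eq_dotProduct_mulVec, warped_eq_fromBlocks, Matrix.fromBlocks_mulVec,
    dotProduct, Fintype.sum_sum_type]
  simp only [Matrix.zero_mulVec, add_zero, Matrix.smul_mulVec, zero_add, Sum.elim_inl,
    Sum.elim_inr, Pi.smul_apply, smul_eq_mul, mul_left_comm, Finset.mul_sum]
  rfl

lemma sq_warped_of_fibPt_eq_zero (gB : (Fin d₁ → ℝ) → Matrix (Fin d₁) (Fin d₁) ℝ)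
    (gF : (Fin d₂ → ℝ) → Matrix (Fin d₂) (Fin d₂) ℝ) (f : (Fin d₁ → ℝ) → ℝ)
    {x v w : Fin d₁ ⊕ Fin d₂ → ℝ} (hw : fibPt w = 0) :
    sq (warped gB gF f) x v w = sq gB (basePt x) (basePt v) (basePt w) := by
  rw [sq_warped, hw, sq_eq_dotProduct_mulVec gF, Matrix.mulVec_zero, dotProduct_zero, mul_zero,
    add_zero]

lemma connMatrixLow_warped (hB : SmoothMetric gB) (hF : SmoothMetric gF)
    {x : Fin d₁ ⊕ Fin d₂ → ℝ} (hf : DifferentiableAt ℝ f (basePt x))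
    (n : Fin d₁ ⊕ Fin d₂ → ℝ) :
    connMatrixLow (warped gB gF f) x n = Matrix.fromBlocks
      (connMatrixLow gB (basePt x) (basePt n))
      (-f (basePt x) • Matrix.vecMulVec (fun a => pd f a (basePt x)) (fibPt n ᵥ* gF (fibPt x)))
      (f (basePt x) • Matrix.vecMulVec (gF (fibPt x) *ᵥ fibPt n) (fun a => pd f a (basePt x)))
      ((f (basePt x) * fderiv ℝ f (basePt x) (basePt n)) • gF (fibPt x)
        + f (basePt x) ^ 2 • connMatrixLow gF (fibPt x) (fibPt n)) := by
  have pd_zero (ρ : Fin d₁ ⊕ Fin d₂) : pd (fun _ => (0 : ℝ)) ρ x = 0 := by simp [pd]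
  have pd_base (a b c : Fin d₁) := pd_comp_basePt_inl (hB.differentiable_apply a b (basePt x)) c
  have pd_base' (a b : Fin d₁) (k : Fin d₂) :=
    pd_comp_basePt_inr (hB.differentiable_apply a b (basePt x)) k
  have pd_fib (i j : Fin d₂) (c : Fin d₁) :=
    pd_sq_mul_fib_inl hf (hF.differentiable_apply i j (fibPt x)) c
  have pd_fib' (i j k : Fin d₂) := pd_sq_mul_fib_inr hf (hF.differentiable_apply i j (fibPt x)) k
  ext (a | i) (b | j) <;>
    simp only [connMatrixLow, warped, Matrix.of_apply, Matrix.fromBlocks_apply₁₁,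
      Matrix.fromBlocks_apply₁₂, Matrix.fromBlocks_apply₂₁, Matrix.fromBlocks_apply₂₂,
      Fintype.sum_sum_type, pd_zero, pd_base, pd_base', pd_fib, pd_fib', add_zero, zero_add,
      sub_self, sub_zero, zero_sub, zero_mul, Finset.sum_const_zero, Matrix.add_apply,
      Matrix.smul_apply, Matrix.vecMulVec_apply, Matrix.vecMul, Matrix.mulVec, dotProduct,
      smul_eq_mul, Finset.mul_sum, fderiv_apply_eq_sum_pd, Finset.sum_mul]
  · rfl
  · exact Finset.sum_congr rfl fun k _ => by simp only [fibPt]; ring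
  · exact Finset.sum_congr rfl fun k _ => by simp only [fibPt]; ring
  · rw [mul_add, Finset.mul_sum, Finset.mul_sum]
    congr 1 <;> refine Finset.sum_congr rfl fun k _ => ?_
    · simp only [basePt]; ring
    · simp only [fibPt]; ring

lemma connMatrix_warped (hB : SmoothMetric gB) (hF : SmoothMetric gF)
    {x : Fin d₁ ⊕ Fin d₂ → ℝ} (hfx : f (basePt x) ≠ 0) (hf : DifferentiableAt ℝ f (basePt x))
    (n : Fin d₁ ⊕ Fin d₂ → ℝ) :
    connMatrix (warped gB gF f) x n = Matrix.fromBlocks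
      (connMatrix gB (basePt x) (basePt n))
      (-f (basePt x) • Matrix.vecMulVec (gradVec gB f (basePt x)) (fibPt n ᵥ* gF (fibPt x)))
      ((f (basePt x))⁻¹ • Matrix.vecMulVec (fibPt n) (fun a => pd f a (basePt x)))
      (((f (basePt x))⁻¹ * fderiv ℝ f (basePt x) (basePt n)) • 1
        + connMatrix gF (fibPt x) (fibPt n)) := by
  have inv_mul_metric : ginv gF (fibPt x) * gF (fibPt x) = 1 :=
    Matrix.nonsing_inv_mul _ (hF.2.2 _)
  have inv_sq_mul : (f (basePt x) ^ 2)⁻¹ * f (basePt x) = (f (basePt x))⁻¹ := by field_simp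
  have inv_sq_mul_sq : (f (basePt x) ^ 2)⁻¹ * f (basePt x) ^ 2 = 1 :=
    inv_mul_cancel₀ (pow_ne_zero 2 hfx)
  rw [connMatrix, ginv_warped hB hF hfx, connMatrixLow_warped hB hF hf, Matrix.fromBlocks_multiply]
  simp only [Matrix.zero_mul, add_zero, zero_add, Matrix.mul_smul, Matrix.mul_add, Matrix.smul_mul,
    Matrix.mul_vecMulVec, Matrix.mulVec_mulVec, inv_mul_metric, Matrix.one_mulVec,
    Matrix.zero_mulVec, Matrix.zero_vecMulVec, smul_zero, ← gradVec_eq_mulVec, Matrix.smul_mulVec,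
    Matrix.smul_vecMulVec, smul_smul, connMatrix, mul_comm _ (f (basePt x) ^ 2)⁻¹, ← mul_assoc,
    inv_sq_mul, inv_sq_mul_sq, one_smul]

lemma basePt_covD_warped (hB : SmoothMetric gB) (hF : SmoothMetric gF)
    {γ V : ℝ → Fin d₁ ⊕ Fin d₂ → ℝ} {u : ℝ} (hfx : f (baseCurve γ u) ≠ 0)
    (hf : DifferentiableAt ℝ f (baseCurve γ u)) :
    basePt (covD (warped gB gF f) γ V u) = covD gB (baseCurve γ) (baseCurve V) u
      - (f (baseCurve γ u) * sq gF (fibCurve γ u) (vel (fibCurve γ) u) (fibCurve V u)) •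
        gradVec gB f (baseCurve γ u) := by
  rw [covD_eq_vel_add_mulVec, covD_eq_vel_add_mulVec, connMatrix_warped (x := γ u) hB hF hfx hf,
    Matrix.fromBlocks_mulVec, sq_eq_dotProduct_mulVec, Matrix.dotProduct_mulVec]
  change vel (baseCurve V) u + (connMatrix gB (baseCurve γ u) (vel (baseCurve γ) u) *ᵥ baseCurve V u
    + (-f (baseCurve γ u) • Matrix.vecMulVec (gradVec gB f (baseCurve γ u))
      (vel (fibCurve γ) u ᵥ* gF (fibCurve γ u))) *ᵥ fibCurve V u) = _
  rw [Matrix.smul_mulVec, Matrix.vecMulVec_mulVec, op_smul_eq_smul, smul_smul]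
  module

lemma fibPt_covD_warped (hB : SmoothMetric gB) (hF : SmoothMetric gF)
    {γ V : ℝ → Fin d₁ ⊕ Fin d₂ → ℝ} {u : ℝ} (hfx : f (baseCurve γ u) ≠ 0)
    (hf : DifferentiableAt ℝ f (baseCurve γ u)) :
    fibPt (covD (warped gB gF f) γ V u) = covD gF (fibCurve γ) (fibCurve V) u
      + (f (baseCurve γ u))⁻¹ • (fderiv ℝ f (baseCurve γ u) (vel (baseCurve γ) u) • fibCurve V u
        + fderiv ℝ f (baseCurve γ u) (baseCurve V u) • vel (fibCurve γ) u) := by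
  rw [covD_eq_vel_add_mulVec, covD_eq_vel_add_mulVec, connMatrix_warped (x := γ u) hB hF hfx hf,
    Matrix.fromBlocks_mulVec, fderiv_apply_eq_sum_pd f _ (baseCurve V u)]
  change vel (fibCurve V) u + (((f (baseCurve γ u))⁻¹ • Matrix.vecMulVec (vel (fibCurve γ) u)
      fun a => pd f a (baseCurve γ u)) *ᵥ baseCurve V u
    + (((f (baseCurve γ u))⁻¹ * fderiv ℝ f (baseCurve γ u) (vel (baseCurve γ) u)) • 1
      + connMatrix gF (fibCurve γ u) (vel (fibCurve γ) u)) *ᵥ fibCurve V u) = _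
  rw [Matrix.smul_mulVec, Matrix.vecMulVec_mulVec, op_smul_eq_smul,
    Matrix.add_mulVec, Matrix.smul_mulVec, Matrix.one_mulVec, dotProduct]
  module

variable {γ V : ℝ → Fin d₁ ⊕ Fin d₂ → ℝ} {h : ℝ → ℝ} {C : ℝ}

lemma SmoothCurve.baseCurve (hγ : SmoothCurve γ) : SmoothCurve (baseCurve γ) :=
  fun a => hγ (Sum.inl a)

lemma SmoothCurve.fibCurve (hγ : SmoothCurve γ) : SmoothCurve (fibCurve γ) :=
  fun i => hγ (Sum.inr i)

lemma covD_smul_fibCurve_of_isParallel (hB : SmoothMetric gB) (hF : SmoothMetric gF)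
    (hf : Differentiable ℝ f) (hf0 : ∀ y, f y ≠ 0) (hγ : SmoothCurve γ) (hV : SmoothCurve V)
    (hpar : IsParallel (warped gB gF f) γ V) (u : ℝ) :
    covD gF (fibCurve γ) (fun w => f (baseCurve γ w) • fibCurve V w) u =
      -fderiv ℝ f (baseCurve γ u) (baseCurve V u) • vel (fibCurve γ) u := by
  have hf0u : f (baseCurve γ u) ≠ 0 := hf0 _
  have fib_eq := fibPt_covD_warped (V := V) hB hF hf0u (hf _)
  rw [isParallel_iff.1 hpar, show fibPt (0 : Fin d₁ ⊕ Fin d₂ → ℝ) = 0 from rfl, eq_comm,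
    add_eq_zero_iff_eq_neg] at fib_eq
  rw [covD_smul gF _ (hasDerivAt_comp_curve (hf _) (hγ.baseCurve.differentiable u))
    (hV.fibCurve.differentiable u), fib_eq, smul_neg, smul_inv_smul₀ hf0u]
  module

/-- The fiber momentum `f² N̄` of a curve in a warped product: the fiber part of its tangent with
the index lowered by the warped metric and raised again by the fiber metric. -/
def fibMomentum (f : (Fin d₁ → ℝ) → ℝ) (γ : ℝ → Fin d₁ ⊕ Fin d₂ → ℝ) (u : ℝ) : Fin d₂ → ℝ :=
  f (baseCurve γ u) ^ 2 • vel (fibCurve γ) u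

lemma differentiable_fibMomentum (hf : Differentiable ℝ f) (hγ : SmoothCurve γ) :
    Differentiable ℝ (fibMomentum f γ) :=
  ((hf.comp hγ.baseCurve.differentiable).fun_pow 2).fun_smul
    hγ.fibCurve.smoothCurve_vel.differentiable

lemma isParallel_fibMomentum (hB : SmoothMetric gB) (hF : SmoothMetric gF)
    (hf : Differentiable ℝ f) (hf0 : ∀ y, f y ≠ 0) (hγ : SmoothCurve γ)
    (hgeo : IsGeodesic (warped gB gF f) γ) : IsParallel gF (fibCurve γ) (fibMomentum f γ) := by
  refine isParallel_iff.2 fun u => ?_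
  have deriv_f := hasDerivAt_comp_curve (hf _) (hγ.baseCurve.differentiable u)
  have covD_f_smul : covD gF (fibCurve γ) (fun w => f (baseCurve γ w) • vel (fibCurve γ) w) u =
      -fderiv ℝ f (baseCurve γ u) (vel (baseCurve γ) u) • vel (fibCurve γ) u :=
    covD_smul_fibCurve_of_isParallel hB hF hf hf0 hγ hγ.smoothCurve_vel hgeo u
  have momentum_eq : fibMomentum f γ =
      fun w => f (baseCurve γ w) • f (baseCurve γ w) • vel (fibCurve γ) w :=
    funext fun w => by rw [fibMomentum, pow_two, mul_smul]
  rw [momentum_eq, covD_smul gF _ deriv_f (deriv_f.differentiableAt.fun_smul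
    (hγ.fibCurve.smoothCurve_vel.differentiable u)), covD_f_smul]
  module

lemma fibCurve_eq_smul_vel_of_isParallel (hB : SmoothMetric gB) (hF : SmoothMetric gF)
    (hf : Differentiable ℝ f) (hf0 : ∀ y, f y ≠ 0) (hγ : SmoothCurve γ)
    (hgeo : IsGeodesic (warped gB gF f) γ) (hV : SmoothCurve V)
    (hpar : IsParallel (warped gB gF f) γ V)
    (hh : ∀ u, HasDerivAt h (fderiv ℝ (fun y => (f y)⁻¹) (baseCurve γ u) (baseCurve V u)) u)
    {t₀ : ℝ} (hV₀ : fibCurve V t₀ = 0) (hh₀ : h t₀ = 0) (u : ℝ) :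
    fibCurve V u = (f (baseCurve γ u) * h u) • vel (fibCurve γ) u := by
  have diff_fV : Differentiable ℝ fun w => f (baseCurve γ w) • fibCurve V w :=
    (hf.comp hγ.baseCurve.differentiable).fun_smul hV.fibCurve.differentiable
  have diff_mom := differentiable_fibMomentum hf hγ
  have diff_hmom : Differentiable ℝ fun w => h w • fibMomentum f γ w := fun w =>
    (hh w).differentiableAt.fun_smul (diff_mom w)
  have parallel_sub : IsParallel gF (fibCurve γ)
      fun w => f (baseCurve γ w) • fibCurve V w - h w • fibMomentum f γ w := by
    refine isParallel_iff.2 fun w => ?_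
    rw [covD_sub gF _ (diff_fV w) (diff_hmom w), covD_smul gF _ (hh w) (diff_mom w),
      covD_smul_fibCurve_of_isParallel hB hF hf hf0 hγ hV hpar, fderiv_inv_apply (hf _) (hf0 _),
      isParallel_iff.1 (isParallel_fibMomentum hB hF hf hf0 hγ hgeo), fibMomentum, smul_zero,
      add_zero, smul_smul, mul_right_comm, neg_mul, inv_mul_cancel₀ (pow_ne_zero 2 (hf0 _)),
      neg_one_mul, sub_self]
  have fV_eq : f (baseCurve γ u) • fibCurve V u = h u • fibMomentum f γ u :=
    sub_eq_zero.1 (congrFun (parallel_sub.eq_zero hF hγ.fibCurve (diff_fV.sub diff_hmom)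
      (t₀ := t₀) (by simp [hV₀, hh₀])) u)
  rw [← smul_right_inj (hf0 (baseCurve γ u)), fV_eq, fibMomentum]
  module

lemma isReducedParallel_baseCurve (hB : SmoothMetric gB) (hF : SmoothMetric gF)
    (hf : Differentiable ℝ f) (hf0 : ∀ y, f y ≠ 0) (hV : SmoothCurve V)
    (hpar : IsParallel (warped gB gF f) γ V)
    (hC : ∀ u, sq gF (fibCurve γ u) (vel (fibCurve γ) u) (vel (fibCurve γ) u) =
      C / f (baseCurve γ u) ^ 4)
    (hh : ∀ u, HasDerivAt h (fderiv ℝ (fun y => (f y)⁻¹) (baseCurve γ u) (baseCurve V u)) u)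
    (hfib : ∀ u, fibCurve V u = (f (baseCurve γ u) * h u) • vel (fibCurve γ) u) :
    IsReducedParallel gB (fun y => (f y)⁻¹) C (baseCurve γ) (baseCurve V) h where
  differentiable := hV.baseCurve.differentiable
  covD_eq u := by
    have hf0u : f (baseCurve γ u) ≠ 0 := hf0 _
    have base_eq := basePt_covD_warped (V := V) hB hF hf0u (hf _)
    rw [isParallel_iff.1 hpar, show basePt (0 : Fin d₁ ⊕ Fin d₂ → ℝ) = 0 from rfl, eq_comm,
      sub_eq_zero] at base_eq
    rw [base_eq, hfib, sq_smul_right, hC, gradVec_inv gB (hf _) hf0u, smul_smul]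
    congr 1
    field_simp
  hasDerivAt := hh

lemma isReducedParallel_vel_baseCurve (hB : SmoothMetric gB) (hF : SmoothMetric gF)
    (hf : Differentiable ℝ f) (hf0 : ∀ y, f y ≠ 0) (hγ : SmoothCurve γ)
    (hgeo : IsGeodesic (warped gB gF f) γ)
    (hC : ∀ u, sq gF (fibCurve γ u) (vel (fibCurve γ) u) (vel (fibCurve γ) u) =
      C / f (baseCurve γ u) ^ 4) :
    IsReducedParallel gB (fun y => (f y)⁻¹) C (baseCurve γ) (vel (baseCurve γ))
      fun u => (f (baseCurve γ u))⁻¹ :=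
  isReducedParallel_baseCurve hB hF hf hf0 hγ.smoothCurve_vel hgeo hC
    (fun u => hasDerivAt_comp_curve ((hf _).fun_inv (hf0 _)) (hγ.baseCurve.differentiable u))
    fun u => by rw [mul_inv_cancel₀ (hf0 _), one_smul]; rfl

lemma exists_hasDerivAt_fderiv_inv (hf : ContDiff ℝ 1 f) (hf0 : ∀ y, f y ≠ 0)
    (hγ : SmoothCurve γ) (hV : SmoothCurve V) (t₀ : ℝ) :
    ∃ h : ℝ → ℝ, h t₀ = 0 ∧
      ∀ u, HasDerivAt h (fderiv ℝ (fun y => (f y)⁻¹) (baseCurve γ u) (baseCurve V u)) u := by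
  have continuous_slope : Continuous fun u =>
      fderiv ℝ (fun y => (f y)⁻¹) (baseCurve γ u) (baseCurve V u) :=
    (((hf.inv hf0).continuous_fderiv one_ne_zero).comp
      hγ.baseCurve.differentiable.continuous).clm_apply hV.baseCurve.differentiable.continuous
  exact ⟨fun u => ∫ t in t₀..u, fderiv ℝ (fun y => (f y)⁻¹) (baseCurve γ t) (baseCurve V t),
    intervalIntegral.integral_same,
    fun u => (continuous_slope.integral_hasStrictDerivAt t₀ u).hasDerivAt⟩

lemma sq_vel_baseCurve_eq (hB : SmoothMetric gB) (hγ : SmoothCurve γ)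
    (hV : IsReducedParallel gB (fun y => (f y)⁻¹) C (baseCurve γ) (baseCurve V) h)
    (hN : IsReducedParallel gB (fun y => (f y)⁻¹) C (baseCurve γ) (vel (baseCurve γ))
      fun u => (f (baseCurve γ u))⁻¹) {t₀ : ℝ} (hh₀ : h t₀ = 0)
    (horth : sq gB (baseCurve γ t₀) (vel (baseCurve γ) t₀) (baseCurve V t₀) = 0) (u : ℝ) :
    sq gB (baseCurve γ u) (vel (baseCurve γ) u) (baseCurve V u) =
      -C * h u / f (baseCurve γ u) := by
  rw [neg_mul, neg_div, mul_div_assoc, div_eq_inv_mul]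
  exact eq_neg_of_add_eq_zero_left
    ((hN.sq_add_mul_eq_of_eq_zero hB hγ.baseCurve.differentiable hV hh₀ u).trans horth)

lemma calE_eq (f : (Fin d₁ → ℝ) → ℝ) (γ V : ℝ → Fin d₁ ⊕ Fin d₂ → ℝ) (h : ℝ → ℝ) :
    calE f γ V h =
      fun u => baseCurve V u - (h u * f (baseCurve γ u)) • vel (baseCurve γ) u := by
  funext u a
  simp only [calE, baseCurve, basePt, Pi.sub_apply, Pi.smul_apply, smul_eq_mul, mul_comm (h u)]

lemma sq_vel_calE {u : ℝ} (hf0 : f (baseCurve γ u) ≠ 0)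
    (hN : sq gB (baseCurve γ u) (vel (baseCurve γ) u) (vel (baseCurve γ) u) =
      -C / f (baseCurve γ u) ^ 2)
    (hNV : sq gB (baseCurve γ u) (vel (baseCurve γ) u) (baseCurve V u) =
      -C * h u / f (baseCurve γ u)) :
    sq gB (baseCurve γ u) (vel (baseCurve γ) u) (calE f γ V h u) = 0 := by
  rw [calE_eq, sq_sub_right, sq_smul_right, hN, hNV]
  field_simp
  ring

lemma sq_calE (hB : SmoothMetric gB) {u : ℝ} (hf0 : f (baseCurve γ u) ≠ 0)
    (hN : sq gB (baseCurve γ u) (vel (baseCurve γ) u) (vel (baseCurve γ) u) =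
      -C / f (baseCurve γ u) ^ 2)
    (hNV : sq gB (baseCurve γ u) (vel (baseCurve γ) u) (baseCurve V u) =
      -C * h u / f (baseCurve γ u)) :
    sq gB (baseCurve γ u) (calE f γ V h u) (calE f γ V h u) =
      sq gB (baseCurve γ u) (baseCurve V u) (baseCurve V u) + C * h u ^ 2 := by
  have horth := sq_vel_calE hf0 hN hNV
  rw [calE_eq] at horth ⊢
  rw [sq_sub_left, sq_smul_left, horth, sq_sub_right, sq_smul_right, sq_comm hB, sq_comm hB _ _
    (vel _ u), hNV]
  field_simp
  ring

lemma covD_calE (hf : Differentiable ℝ f) (hf0 : ∀ y, f y ≠ 0) (hγ : SmoothCurve γ)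
    (hV : IsReducedParallel gB (fun y => (f y)⁻¹) C (baseCurve γ) (baseCurve V) h)
    (hN : IsReducedParallel gB (fun y => (f y)⁻¹) C (baseCurve γ) (vel (baseCurve γ))
      fun u => (f (baseCurve γ u))⁻¹) (u : ℝ) :
    covD gB (baseCurve γ) (calE f γ V h) u =
      -deriv (fun w => h w * f (baseCurve γ w)) u • vel (baseCurve γ) u := by
  rw [calE_eq]
  exact hV.covD_sub_smul hN ((hV.hasDerivAt u).differentiableAt.fun_mul
    (hf.comp hγ.baseCurve.differentiable u)).hasDerivAt (mul_inv_cancel_right₀ (hf0 _) _)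

lemma fermiWalkerAt_calE (hB : SmoothMetric gB) (hf : Differentiable ℝ f) (hf0 : ∀ y, f y ≠ 0)
    (hγ : SmoothCurve γ) (hC : 0 < C) (hV : Differentiable ℝ (baseCurve V))
    (hh : Differentiable ℝ h)
    (hN : ∀ u, sq gB (baseCurve γ u) (vel (baseCurve γ) u) (vel (baseCurve γ) u) =
      -C / f (baseCurve γ u) ^ 2)
    (horth : ∀ u, sq gB (baseCurve γ u) (vel (baseCurve γ) u) (calE f γ V h u) = 0) {k u : ℝ}
    (hDV : covD gB (baseCurve γ) (calE f γ V h) u = k • vel (baseCurve γ) u) :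
    FermiWalkerAt gB (baseCurve γ) (fwS f C γ) (calE f γ V h) u := by
  have diff_vel := hγ.baseCurve.smoothCurve_vel.differentiable
  have diff_f := hf.comp hγ.baseCurve.differentiable
  have diff_rate : DifferentiableAt ℝ (fwS f C γ) u :=
    (differentiableAt_const _).fun_div (diff_f u) (hf0 _)
  refine fermiWalkerAt_of_covD_eq_smul_vel hB (hγ.baseCurve.differentiable u) (diff_vel u) ?_
    diff_rate (div_ne_zero (Real.sqrt_ne_zero'.2 hC) (hf0 _)) ?_ horth hDV
  · rw [calE_eq]
    exact (hV u).fun_sub (((hh u).fun_mul (diff_f u)).fun_smul (diff_vel u))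
  · rw [hN, fwS, div_pow, Real.sq_sqrt hC.le, neg_div]
    rfl

end WarpedProduct

/-- For a parallelly transported field `E` along a null geodesic of
a warped product, with initial value orthogonal to the tangent and with vanishing
fiber component: `Ē^i = f h N̄^i`; `ĝ(Ê,Ê) + C h² = b`; `ĝ(N̂,Ê) = −C h/f`; the
field `ℰ̂ = Ê − f h N̂` is orthonormal data along the base projection with
`N̂^b∇̂_bℰ̂^a = −(d(hf)/du) N̂^a` and `ℰ̂(0) = ê`; and for `C ≠ 0` it is
Fermi–Walker transported along the (timelike) base projection. -/
theorem fermi_walker_of_parallel_transport {d₁ d₂ : ℕ}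
    (gB : (Fin d₁ → ℝ) → Matrix (Fin d₁) (Fin d₁) ℝ)
    (gF : (Fin d₂ → ℝ) → Matrix (Fin d₂) (Fin d₂) ℝ)
    (f : (Fin d₁ → ℝ) → ℝ)
    (hB : SmoothMetric gB) (hF : SmoothMetric gF)
    (hf : ContDiff ℝ (⊤ : ℕ∞) f) (hfpos : ∀ y, 0 < f y)
    (γ : ℝ → (Fin d₁ ⊕ Fin d₂) → ℝ) (hγs : SmoothCurve γ)
    (hgeo : IsGeodesic (warped gB gF f) γ)
    (hnull : ∀ u, sq (warped gB gF f) (γ u) (vel γ u) (vel γ u) = 0)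
    (C : ℝ) (hC0 : 0 ≤ C)
    (hCfib : ∀ u, sq gF (fibPt (γ u)) (vel (fibCurve γ) u) (vel (fibCurve γ) u)
        = C / (f (basePt (γ u))) ^ 4)
    (hCbase : ∀ u, sq gB (basePt (γ u)) (vel (baseCurve γ) u) (vel (baseCurve γ) u)
        = -C / (f (basePt (γ u))) ^ 2)
    (E : ℝ → (Fin d₁ ⊕ Fin d₂) → ℝ) (hEs : SmoothCurve E)
    (hE : IsParallel (warped gB gF f) γ E)
    (hfib0 : ∀ i, E 0 (Sum.inr i) = 0)
    (horth : sq (warped gB gF f) (γ 0) (vel γ 0) (E 0) = 0)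
    (b : ℝ) (hb : b = sq (warped gB gF f) (γ 0) (E 0) (E 0)) :
    ∃ h : ℝ → ℝ,
      h 0 = 0 ∧
      (∀ u, HasDerivAt h
        (∑ a, E u (Sum.inl a) * pd (fun y => (f y)⁻¹) a (basePt (γ u))) u) ∧
      (∀ (u : ℝ) (i : Fin d₂),
        E u (Sum.inr i) = f (basePt (γ u)) * h u * vel (fibCurve γ) u i) ∧
      (∀ u : ℝ, sq gB (basePt (γ u)) (fun a => E u (Sum.inl a)) (fun a => E u (Sum.inl a))
          + C * (h u) ^ 2 = b) ∧
      (∀ u : ℝ, sq gB (basePt (γ u)) (vel (baseCurve γ) u) (fun a => E u (Sum.inl a))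
          = -C * h u / f (basePt (γ u))) ∧
      (∀ u : ℝ, sq gB (basePt (γ u)) (calE f γ E h u) (calE f γ E h u) = b) ∧
      (∀ u : ℝ, sq gB (basePt (γ u)) (vel (baseCurve γ) u) (calE f γ E h u) = 0) ∧
      (∀ (u : ℝ) (a : Fin d₁),
        covD gB (baseCurve γ) (calE f γ E h) u a
          = -(deriv (fun w => h w * f (basePt (γ w))) u) * vel (baseCurve γ) u a) ∧
      (∀ a, calE f γ E h 0 a = E 0 (Sum.inl a)) ∧
      (C ≠ 0 →
        ∀ (u : ℝ) (a : Fin d₁),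
          (fwS f C γ u)⁻¹ * covD gB (baseCurve γ) (calE f γ E h) u a
            = sq gB (basePt (γ u)) (calE f γ E h u) (fwA gB f C γ u) * fwU f C γ u a
              - sq gB (basePt (γ u)) (calE f γ E h u) (fwU f C γ u) * fwA gB f C γ u a) := by
  have hf0 (y : Fin d₁ → ℝ) : f y ≠ 0 := (hfpos y).ne'
  have hf' : Differentiable ℝ f := hf.differentiable (by simp)
  have fib_E₀ : fibPt (E 0) = 0 := funext hfib0
  rw [sq_warped_of_fibPt_eq_zero gB gF f fib_E₀] at horth hb
  obtain ⟨h, h₀, hh⟩ := exists_hasDerivAt_fderiv_inv (hf.of_le (by simp)) hf0 hγs hEs 0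
  have fib_E := fibCurve_eq_smul_vel_of_isParallel hB hF hf' hf0 hγs hgeo hEs hE hh fib_E₀ h₀
  have red_E := isReducedParallel_baseCurve hB hF hf' hf0 hEs hE hCfib hh fib_E
  have red_N := isReducedParallel_vel_baseCurve hB hF hf' hf0 hγs hgeo hCfib
  have norm_E (u : ℝ) : sq gB (basePt (γ u)) (basePt (E u)) (basePt (E u)) + C * h u ^ 2 = b := by
    rw [hb, pow_two]
    exact red_E.sq_add_mul_eq_of_eq_zero hB hγs.baseCurve.differentiable red_E h₀ u
  have pairing := sq_vel_baseCurve_eq hB hγs red_E red_N h₀ horth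
  have orth_E (u : ℝ) := sq_vel_calE (hf0 _) (hCbase u) (pairing u)
  have covD_E := covD_calE hf' hf0 hγs red_E red_N
  refine ⟨h, h₀, fun u => (hh u).congr_deriv ?_, fun u i => congrFun (fib_E u) i, norm_E, pairing,
    fun u => (sq_calE hB (hf0 _) (hCbase u) (pairing u)).trans (norm_E u), orth_E,
    fun u a => congrFun (covD_E u) a, fun a => by simp [calE, h₀], fun hC u a => ?_⟩
  · simp [fderiv_apply_eq_sum_pd, baseCurve, basePt, mul_comm]
  · exact congrFun (fermiWalkerAt_calE hB hf' hf0 hγs (hC0.lt_of_ne' hC) red_E.differentiable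
      (fun w => (hh w).differentiableAt) hCbase orth_E (covD_E u)) a

end Paper
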